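/- arXiv:1805.01121 — 2 statements merged into one kernel-verified Lean document; each statement's English description precedes it below -/
import Mathlib

section
/- Let n be a positive integer, let q be a real number with 0 < q < 1, and let z > 0 be real. Then ∏_{k=0}^{n-1} Γ_{q^n}(z + k/n) = (((q^n; q^n)_∞)^n (1-q^n)^{(n-1)/2} / (q; q)_∞) · ((1-q^n)/(1-q))^{1-nz} · Γ_q(nz). (This corrects the formula of Mahmoud and Agarwal, whose right-hand side had the factor (1-q)^{(n-1)/2} in place of (1-q^n)^{(n-1)/2}.) -/
/-- Infinite q-Pochhammer symbol `(a; q)_∞ = ∏_{i=0}^∞ (1 - a qⁱ)` (real version). -/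
noncomputable def qPochR (a q : ℝ) : ℝ := ∏' i : ℕ, (1 - a * q ^ i)

/-- The q-gamma function `Γ_q(z) = ((q;q)_∞ / (q^z;q)_∞) (1-q)^{1-z}` for `0 < q < 1`. -/
noncomputable def qGamma (q z : ℝ) : ℝ :=
  qPochR q q / qPochR (q ^ z) q * (1 - q) ^ (1 - z)

/-!
Sorting the factors `1 - a qⁱ` of `(a; q)_∞` by the residue of `i` modulo `n` gives
`(a; q)_∞ = ∏_{k < n} (a qᵏ; qⁿ)_∞`. For `a = q^{nz}` we have `a qᵏ = (qⁿ)^{z + k/n}`, so the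
denominators on the left multiply to `(q^{nz}; q)_∞`, the denominator of `Γ_q(nz)`. The exponents of
`1 - qⁿ` add up to `∑_{k < n} (1 - z - k/n) = (n - 1)/2 + (1 - nz)`.
-/

section InfiniteProducts

variable {𝕜 : Type*} [NormedField 𝕜]

lemma summable_norm_neg_mul_pow (a : 𝕜) {q : 𝕜} (hq : ‖q‖ < 1) :
    Summable fun i : ℕ => ‖-(a * q ^ i)‖ := by
  simpa only [norm_neg, norm_mul, norm_pow] using
    (summable_geometric_of_lt_one (norm_nonneg q) hq).mul_left ‖a‖

lemma multipliable_one_sub_mul_pow [CompleteSpace 𝕜] (a : 𝕜) {q : 𝕜} (hq : ‖q‖ < 1) :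
    Multipliable fun i : ℕ => 1 - a * q ^ i := by
  simpa only [sub_eq_add_neg] using
    multipliable_one_add_of_summable (summable_norm_neg_mul_pow a hq)

lemma tprod_nat_eq_prod_range_tprod_mul_add {α : Type*} [CommMonoid α] [TopologicalSpace α]
    [ContinuousMul α] [T3Space α] {f : ℕ → α} {n : ℕ} (hn : n ≠ 0) (hf : Multipliable f)
    (hres : ∀ k < n, Multipliable fun j => f (j * n + k)) :
    ∏' i, f i = ∏ k ∈ Finset.range n, ∏' j, f (j * n + k) := by
  have : NeZero n := ⟨hn⟩
  let e : Fin n × ℕ ≃ ℕ := (Equiv.prodComm _ _).trans (Nat.divModEquiv n).symm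
  calc ∏' i, f i = ∏' p : Fin n × ℕ, f (e p) := (e.tprod_eq f).symm
    _ = ∏' k : Fin n, ∏' j, f (j * n + k) :=
      (e.multipliable_iff.2 hf).tprod_prod' fun k => hres k k.isLt
    _ = ∏ k ∈ Finset.range n, ∏' j, f (j * n + k) := by
      rw [tprod_fintype, Fin.prod_univ_eq_prod_range fun k => ∏' j, f (j * n + k)]

end InfiniteProducts

lemma qPochR_ne_zero {a q : ℝ} (hq : |q| < 1) (ha : ∀ i : ℕ, a * q ^ i ≠ 1) :
    qPochR a q ≠ 0 := by
  simpa only [qPochR, sub_eq_add_neg] using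
    tprod_one_add_ne_zero_of_summable
      (fun i => by simpa only [← sub_eq_add_neg] using sub_ne_zero.2 (ha i).symm)
      (summable_norm_neg_mul_pow a hq)

lemma qPochR_rpow_ne_zero {q z : ℝ} (hq0 : 0 < q) (hq1 : q < 1) (hz : ∀ m : ℕ, z ≠ -m) :
    qPochR (q ^ z) q ≠ 0 := by
  refine qPochR_ne_zero (by rwa [abs_of_pos hq0]) fun m hm => hz m ?_
  rw [← Real.rpow_add_natCast hq0.ne', ← Real.rpow_zero q, Real.rpow_right_inj hq0 hq1.ne] at hm
  exact eq_neg_of_add_eq_zero_left hm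

lemma prod_qPochR_mul_pow (a : ℝ) {q : ℝ} (hq : |q| < 1) {n : ℕ} (hn : n ≠ 0) :
    ∏ k ∈ Finset.range n, qPochR (a * q ^ k) (q ^ n) = qPochR a q := by
  have hqn : ‖q ^ n‖ < 1 := by
    rw [norm_pow]
    exact pow_lt_one₀ (norm_nonneg q) hq hn
  have hterm (k j : ℕ) : 1 - a * q ^ (j * n + k) = 1 - a * q ^ k * (q ^ n) ^ j := by ring
  have hsplit := tprod_nat_eq_prod_range_tprod_mul_add hn (multipliable_one_sub_mul_pow a hq)
    fun k _ => by simpa only [hterm] using multipliable_one_sub_mul_pow (a * q ^ k) hqn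
  simpa only [qPochR, hterm] using hsplit.symm

lemma pow_rpow_add_div {q : ℝ} (hq : 0 < q) {n : ℕ} (hn : n ≠ 0) (z : ℝ) (k : ℕ) :
    (q ^ n) ^ (z + (k : ℝ) / n) = q ^ ((n : ℝ) * z) * q ^ k := by
  rw [← Real.rpow_natCast_mul hq.le, mul_add, mul_div_cancel₀ _ (Nat.cast_ne_zero.2 hn),
    Real.rpow_add_natCast hq.ne']

lemma sum_range_one_sub_add_div {K : Type*} [Field K] [CharZero K] {n : ℕ} (hn : n ≠ 0) (z : K) :
    ∑ k ∈ Finset.range n, (1 - (z + (k : K) / n)) = ((n : K) - 1) / 2 + (1 - n * z) := by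
  have hgauss : ∑ k ∈ Finset.range n, (k : K) = n * (n - 1) / 2 := by
    rw [← Nat.cast_sum, Finset.sum_range_id, ← Nat.choose_two_right, Nat.cast_choose_two]
  have hn' : (n : K) ≠ 0 := Nat.cast_ne_zero.2 hn
  simp only [Finset.sum_sub_distrib, Finset.sum_add_distrib, ← Finset.sum_div, hgauss,
    Finset.sum_const, Finset.card_range, nsmul_eq_mul]
  field_simp
  ring

lemma prod_qGamma_pow_add_div {n : ℕ} (hn : n ≠ 0) {q : ℝ} (hq0 : 0 < q) (hq1 : q < 1) (z : ℝ) :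
    ∏ k ∈ Finset.range n, qGamma (q ^ n) (z + (k : ℝ) / n) =
      qPochR (q ^ n) (q ^ n) ^ n / qPochR (q ^ ((n : ℝ) * z)) q *
        (1 - q ^ n) ^ (((n : ℝ) - 1) / 2 + (1 - n * z)) := by
  have hqn : 0 < 1 - q ^ n := sub_pos.2 (pow_lt_one₀ hq0.le hq1 hn)
  have hq : |q| < 1 := by rwa [abs_of_pos hq0]
  simp only [qGamma, pow_rpow_add_div hq0 hn, Finset.prod_mul_distrib, Finset.prod_div_distrib,
    Finset.prod_const, Finset.card_range, prod_qPochR_mul_pow _ hq hn,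
    ← Real.rpow_sum_of_pos hqn, sum_range_one_sub_add_div hn]

theorem corrected_mahmoud_agarwal_general {n : ℕ} (hn : n ≠ 0) {q : ℝ} (hq0 : 0 < q) (hq1 : q < 1)
    {z : ℝ} (hz : ∀ m : ℕ, (n : ℝ) * z ≠ -m) :
    ∏ k ∈ Finset.range n, qGamma (q ^ n) (z + (k : ℝ) / n) =
      (qPochR (q ^ n) (q ^ n)) ^ n * (1 - q ^ n) ^ (((n : ℝ) - 1) / 2) / qPochR q q *
        ((1 - q ^ n) / (1 - q)) ^ (1 - (n : ℝ) * z) * qGamma q ((n : ℝ) * z) := by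
  have hqn : 0 < 1 - q ^ n := sub_pos.2 (pow_lt_one₀ hq0.le hq1 hn)
  have hq : 0 < 1 - q := sub_pos.2 hq1
  have hr : (1 - q) ^ (1 - (n : ℝ) * z) ≠ 0 := (Real.rpow_pos_of_pos hq _).ne'
  have hnum : qPochR q q ≠ 0 := by
    simpa only [Real.rpow_one] using
      qPochR_rpow_ne_zero hq0 hq1 (z := 1) fun m => by linarith [m.cast_nonneg (α := ℝ)]
  have hden : qPochR (q ^ ((n : ℝ) * z)) q ≠ 0 := qPochR_rpow_ne_zero hq0 hq1 hz
  rw [prod_qGamma_pow_add_div hn hq0 hq1, Real.rpow_add hqn, Real.div_rpow hqn.le hq.le, qGamma]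
  field_simp

theorem corrected_mahmoud_agarwal (n : ℕ) (hn : 0 < n) (q : ℝ)
    (hq0 : 0 < q) (hq1 : q < 1) (z : ℝ) (hz : 0 < z) :
    ∏ k ∈ Finset.range n, qGamma (q ^ n) (z + (k : ℝ) / n) =
      (qPochR (q ^ n) (q ^ n)) ^ n * (1 - q ^ n) ^ (((n : ℝ) - 1) / 2) / qPochR q q *
        ((1 - q ^ n) / (1 - q)) ^ (1 - (n : ℝ) * z) * qGamma q ((n : ℝ) * z) :=
  corrected_mahmoud_agarwal_general hn.ne' hq0 hq1 fun m =>
    ((neg_nonpos.2 m.cast_nonneg).trans_lt (by positivity)).ne'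
end

section
/- Let n be a positive integer, let τ be a complex number with Im(τ) > 0, and set q = e^{πiτ}. Then ∏_{k=1}^{n-1} sin_{q^n}(kπ/n) = q^{(n-1)(n-2)/12} · ((q²; q²)_∞)² / (((q^n; q^{2n})_∞)^{2n-2} ((q^{2n}; q^{2n})_∞)²), where q^{(n-1)(n-2)/12} denotes e^{πiτ(n-1)(n-2)/12} and sin_{q^n} is formed with parameter nτ (nome q^n = e^{πinτ}). -/
open Complex

/-- Infinite q-Pochhammer symbol `(a; q)_∞ = ∏_{i=0}^∞ (1 - a qⁱ)`. -/
noncomputable def qPoch (a q : ℂ) : ℂ := ∏' i : ℕ, (1 - a * q ^ i)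

/-- Jacobi's first theta function
`θ₁(z | τ) = 2 ∑_{n=0}^∞ (-1)ⁿ e^{πiτ(2n+1)²/4} sin((2n+1)z)`. -/
noncomputable def theta1 (z τ : ℂ) : ℂ :=
  2 * ∑' n : ℕ, (-1 : ℂ) ^ n * Complex.exp (Real.pi * Complex.I * τ * (2 * n + 1) ^ 2 / 4) *
    Complex.sin ((2 * n + 1) * z)

/-- Gosper's q-sine with parameter `τ` (nome `q = e^{πiτ}`):
`sin_q(z) = θ₁(z | -1/τ) / θ₁(π/2 | -1/τ)`. -/
noncomputable def qSin (τ z : ℂ) : ℂ :=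
  theta1 z (-1 / τ) / theta1 ((Real.pi : ℂ) / 2) (-1 / τ)

/-!
Jacobi's imaginary transformation turns `θ₁(πx | -1/τ)` into an explicit factor times
`jacobiTheta₂` with nome `q = e^{πiτ}`, which the triple product expands as a product of
Pochhammer symbols. In the quotient defining the `q`-sine the square root and `(q²; q²)_∞` cancel,
leaving
`sin_q(πx) = q^{(x - 1/2)²} (q^{2x}; q²)_∞ (q^{2(1 - x)}; q²)_∞ / (q; q²)_∞²`.
With `q` replaced by `qⁿ` and `x = k/n`, the numerator becomes
`(q^{2k}; q^{2n})_∞ (q^{2(n - k)}; q^{2n})_∞`. As `k` runs over `1, …, n - 1`, both families collect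
the factors of `(q²; q²)_∞` by residue class modulo `n`, so each of them multiplies to
`(q²; q²)_∞ / (q^{2n}; q^{2n})_∞`. The powers of `q` add up by a sum of squares.

The triple product is the limit of the `q`-binomial theorem for `2N` factors, centred at the middle
term and taken by dominated convergence.
-/

open Filter Finset
open scoped Real Topology

/-- The finite `q`-Pochhammer symbol `(a; q)_n = ∏_{i=0}^{n-1} (1 - a qⁱ)`. -/
def qPochFin {R : Type*} [CommRing R] (a q : R) (n : ℕ) : R := ∏ i ∈ range n, (1 - a * q ^ i)

section CommRing

variable {R : Type*} [CommRing R] (a q : R)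

@[simp]
lemma qPochFin_zero : qPochFin a q 0 = 1 := prod_range_zero _

lemma qPochFin_succ (n : ℕ) : qPochFin a q (n + 1) = qPochFin a q n * (1 - a * q ^ n) :=
  prod_range_succ _ _

lemma qPochFin_add (m n : ℕ) :
    qPochFin a q (m + n) = qPochFin a q m * qPochFin (a * q ^ m) q n := by
  simp only [qPochFin, prod_range_add, pow_add, mul_assoc]

lemma prod_qPochFin_mul_pow (n N : ℕ) :
    ∏ j ∈ range n, qPochFin (a * q ^ j) (q ^ n) N = qPochFin a q (N * n) := by
  induction N with
  | zero => simp
  | succ N ih =>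
    simp only [qPochFin_succ, prod_mul_distrib, ih]
    rw [Nat.succ_mul, qPochFin_add]
    congr 1
    exact prod_congr rfl fun j _ => by ring

end CommRing

/-- The Gaussian binomial coefficient `[n, k]_q`, defined by `q`-Pascal's rule so that it makes
sense without dividing by `(q; q)_k`. -/
def gaussBinom {R : Type*} [Semiring R] (q : R) : ℕ → ℕ → R
  | _, 0 => 1
  | 0, _ + 1 => 0
  | n + 1, k + 1 => gaussBinom q n k + q ^ (k + 1) * gaussBinom q n (k + 1)

section Semiring

variable {R : Type*} [Semiring R] (q : R)

@[simp]
lemma gaussBinom_zero_right (n : ℕ) : gaussBinom q n 0 = 1 := by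
  cases n <;> rfl

lemma gaussBinom_succ_succ (n k : ℕ) :
    gaussBinom q (n + 1) (k + 1) = gaussBinom q n k + q ^ (k + 1) * gaussBinom q n (k + 1) :=
  rfl

lemma gaussBinom_eq_zero_of_lt {n k : ℕ} (h : n < k) : gaussBinom q n k = 0 := by
  induction n generalizing k with
  | zero => obtain ⟨k, rfl⟩ := Nat.exists_eq_add_of_lt h; rfl
  | succ n ih =>
    obtain ⟨k, rfl⟩ := Nat.exists_eq_succ_of_ne_zero (Nat.ne_zero_of_lt h)
    rw [gaussBinom_succ_succ, ih (by omega), ih (by omega), mul_zero, add_zero]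

lemma gaussBinom_self (n : ℕ) : gaussBinom q n n = 1 := by
  induction n with
  | zero => rfl
  | succ n ih =>
    rw [gaussBinom_succ_succ, ih, gaussBinom_eq_zero_of_lt q n.lt_succ_self, mul_zero, add_zero]

end Semiring

lemma gaussBinom_add_mul_qPochFin {R : Type*} [CommRing R] (q : R) (m n : ℕ) :
    gaussBinom q (m + n) m * (qPochFin q q m * qPochFin q q n) = qPochFin q q (m + n) := by
  induction m generalizing n with
  | zero => simp
  | succ m ihm =>
    induction n with
    | zero => simp [gaussBinom_self]
    | succ n ihn =>
      have hm := ihm (n + 1)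
      rw [show m + (n + 1) = m + 1 + n by ring] at hm
      rw [← add_assoc, gaussBinom_succ_succ, qPochFin_succ q q (m + 1 + n)]
      rw [qPochFin_succ q q n] at hm ⊢
      rw [qPochFin_succ q q m] at ihn ⊢
      linear_combination (1 - q * q ^ m) * hm + q ^ (m + 1) * (1 - q * q ^ n) * ihn

/-- The `q`-binomial theorem. -/
theorem prod_one_add_mul_pow_eq_sum_gaussBinom {R : Type*} [CommSemiring R] (q x : R) (n : ℕ) :
    ∏ i ∈ range n, (1 + x * q ^ i) =
      ∑ j ∈ range (n + 1), gaussBinom q n j * (q ^ j.choose 2 * x ^ j) := by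
  induction n generalizing x with
  | zero => simp
  | succ n ih =>
    set S := ∑ j ∈ range (n + 1), gaussBinom q n j * (q ^ j.choose 2 * (x * q) ^ j) with hS
    have hprod : ∏ i ∈ range n, (1 + x * q ^ (i + 1)) = S := by
      simp only [hS, ← ih (x * q), pow_succ', mul_assoc]
    have hshift : S = ∑ j ∈ range (n + 1), gaussBinom q n (j + 1) *
        (q ^ (j + 1).choose 2 * (x * q) ^ (j + 1)) + 1 := by
      rw [sum_range_succ, gaussBinom_eq_zero_of_lt q n.lt_succ_self, zero_mul, add_zero, hS,
        sum_range_succ']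
      simp
    have hterm (j : ℕ) : gaussBinom q (n + 1) (j + 1) * (q ^ (j + 1).choose 2 * x ^ (j + 1)) =
        x * (gaussBinom q n j * (q ^ j.choose 2 * (x * q) ^ j)) +
          gaussBinom q n (j + 1) * (q ^ (j + 1).choose 2 * (x * q) ^ (j + 1)) := by
      rw [gaussBinom_succ_succ, Nat.choose_succ_succ' j 1, Nat.choose_one_right]
      ring
    have hzero : gaussBinom q (n + 1) 0 * (q ^ Nat.choose 0 2 * x ^ 0) = 1 := by simp
    rw [prod_range_succ', hprod, sum_range_succ', sum_congr rfl fun j _ => hterm j,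
      sum_add_distrib, ← mul_sum, ← hS, add_assoc, hzero, ← hshift]
    ring

lemma sq_pow_choose_two_mul_pow {M : Type*} [Monoid M] (x : M) (n : ℕ) :
    (x ^ 2) ^ n.choose 2 * x ^ n = x ^ n ^ 2 := by
  rw [← pow_mul, ← pow_add, mul_comm 2, Nat.choose_two_right,
    Nat.div_mul_cancel (Nat.even_mul_pred_self n).two_dvd, sq, ← Nat.mul_add_one]
  cases n <;> simp

section Field

variable {K : Type*} [Field K]

lemma qPochFin_eq_reverse {a q : K} (ha : a ≠ 0) (hq : q ≠ 0) (n : ℕ) :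
    qPochFin a q n = (-a) ^ n * q ^ n.choose 2 * qPochFin (q / (a * q ^ n)) q n := by
  have hpow : ∏ i ∈ range n, (-a * q ^ i) = (-a) ^ n * q ^ n.choose 2 := by
    rw [prod_mul_distrib, prod_const, card_range, prod_pow_eq_pow_sum, sum_range_id,
      Nat.choose_two_right]
  rw [← hpow, qPochFin, qPochFin, ← prod_range_reflect (fun i => 1 - q / (a * q ^ n) * q ^ i),
    ← prod_mul_distrib]
  refine prod_congr rfl fun i hi => ?_
  obtain ⟨d, rfl⟩ := Nat.exists_eq_add_of_le' (mem_range.mp hi)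
  rw [show d + i.succ - 1 - i = d by omega, pow_add, pow_succ]
  field_simp
  ring

variable {Q w : K}

lemma qPochFin_two_mul_eq_mul_qPochFin (hQ : Q ≠ 0) (hw : w ≠ 0) (N : ℕ) :
    qPochFin (-(Q * w / Q ^ (2 * N))) (Q ^ 2) (2 * N) =
      w ^ N / Q ^ N ^ 2 * (qPochFin (-(Q * w)) (Q ^ 2) N * qPochFin (-(Q / w)) (Q ^ 2) N) := by
  have ha : -(Q * w / Q ^ (2 * N)) ≠ 0 := by simp [hQ, hw]
  have hhigh : -(Q * w / Q ^ (2 * N)) * (Q ^ 2) ^ N = -(Q * w) := by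
    rw [← pow_mul, neg_mul, div_mul_cancel₀ _ (pow_ne_zero _ hQ)]
  have hlow : Q ^ 2 / -(Q * w) = -(Q / w) := by field_simp
  have hunit : (Q * w / Q ^ (2 * N)) ^ N * (Q ^ 2) ^ N.choose 2 = w ^ N / Q ^ N ^ 2 := by
    rw [div_pow, mul_pow, div_mul_eq_mul_div, mul_right_comm, mul_comm (Q ^ N),
      sq_pow_choose_two_mul_pow, ← pow_mul, mul_assoc, ← sq, mul_comm 2, pow_mul]
    field_simp
  rw [two_mul N, qPochFin_add, ← two_mul, qPochFin_eq_reverse ha (pow_ne_zero 2 hQ), hhigh, hlow,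
    neg_neg, hunit, mul_assoc, mul_comm (qPochFin (-(Q / w)) _ _)]

/-- The finite form of the Jacobi triple product. -/
theorem qPochFin_mul_qPochFin_eq_sum_gaussBinom (hQ : Q ≠ 0) (hw : w ≠ 0) (N : ℕ) :
    qPochFin (-(Q * w)) (Q ^ 2) N * qPochFin (-(Q / w)) (Q ^ 2) N =
      ∑ k ∈ Icc (-N : ℤ) N,
        gaussBinom (Q ^ 2) (2 * N) (N + k).toNat * (Q ^ k ^ 2 * w ^ k) := by
  have hterm (j : ℕ) : (Q ^ 2) ^ j.choose 2 * (Q * w / Q ^ (2 * N)) ^ j =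
      w ^ N / Q ^ N ^ 2 * (Q ^ (-N + j : ℤ) ^ 2 * w ^ (-N + j : ℤ)) := by
    have hsq : (-N + j : ℤ) ^ 2 = (j ^ 2 : ℕ) - (2 * N * j : ℕ) + (N ^ 2 : ℕ) := by
      push_cast
      ring
    rw [hsq, zpow_add₀ hQ, zpow_sub₀ hQ, zpow_add₀ hw, zpow_neg]
    simp only [zpow_natCast]
    rw [← sq_pow_choose_two_mul_pow Q j, div_pow, mul_pow, ← pow_mul Q (2 * N)]
    field_simp
  have hunit : w ^ N / Q ^ N ^ 2 ≠ 0 := by simp [hQ, hw]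
  have hprod := prod_one_add_mul_pow_eq_sum_gaussBinom (Q ^ 2) (Q * w / Q ^ (2 * N)) (2 * N)
  rw [← mul_right_inj' hunit, ← qPochFin_two_mul_eq_mul_qPochFin hQ hw, qPochFin]
  simp only [neg_mul, sub_neg_eq_add]
  rw [hprod, Int.Icc_eq_finset_map, sum_map, mul_sum,
    show ((N : ℤ) + 1 - -N).toNat = 2 * N + 1 by omega]
  refine sum_congr rfl fun j _ => ?_
  simp [hterm, mul_left_comm]

end Field

section NormedField

variable {K : Type*} [NormedField K] {a q : K}

lemma summable_norm_mul_pow (a : K) (hq : ‖q‖ < 1) : Summable fun i : ℕ => ‖a * q ^ i‖ := by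
  simpa using (summable_geometric_of_lt_one (norm_nonneg q) hq).mul_left ‖a‖

lemma one_sub_mul_pow_ne_zero (ha : ‖a‖ < 1) (hq : ‖q‖ ≤ 1) (i : ℕ) : 1 - a * q ^ i ≠ 0 := by
  have hlt : ‖a * q ^ i‖ < 1 := by
    rw [norm_mul, norm_pow]
    exact mul_lt_one_of_nonneg_of_lt_one_left (norm_nonneg a) ha (pow_le_one₀ (norm_nonneg q) hq)
  exact sub_ne_zero.mpr fun h => by simp [← h] at hlt

lemma qPochFin_ne_zero (ha : ‖a‖ < 1) (hq : ‖q‖ ≤ 1) (n : ℕ) : qPochFin a q n ≠ 0 :=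
  prod_ne_zero_iff.mpr fun i _ => one_sub_mul_pow_ne_zero ha hq i

lemma gaussBinom_add_eq_div (hq : ‖q‖ < 1) (m n : ℕ) :
    gaussBinom q (m + n) m = qPochFin q q (m + n) / (qPochFin q q m * qPochFin q q n) := by
  rw [eq_div_iff (mul_ne_zero (qPochFin_ne_zero hq hq.le m) (qPochFin_ne_zero hq hq.le n)),
    gaussBinom_add_mul_qPochFin]

lemma norm_pow_lt_one (hq : ‖q‖ < 1) {n : ℕ} (hn : n ≠ 0) : ‖q ^ n‖ < 1 := by
  simpa using pow_lt_one₀ (norm_nonneg q) hq hn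

end NormedField

section Complex

variable {a q : ℂ}

lemma tendsto_qPochFin (a : ℂ) (hq : ‖q‖ < 1) :
    Tendsto (qPochFin a q) atTop (𝓝 (qPoch a q)) := by
  have hmul := multipliable_one_add_of_summable (f := fun i => -(a * q ^ i))
    (by simpa only [norm_neg] using summable_norm_mul_pow a hq)
  simp only [← sub_eq_add_neg] at hmul
  exact hmul.tendsto_prod_tprod_nat

lemma qPoch_ne_zero (ha : ‖a‖ < 1) (hq : ‖q‖ < 1) : qPoch a q ≠ 0 := by
  have hne := tprod_one_add_ne_zero_of_summable (f := fun i => -(a * q ^ i))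
    (fun i => by simpa only [← sub_eq_add_neg] using one_sub_mul_pow_ne_zero ha hq.le i)
    (by simpa only [norm_neg] using summable_norm_mul_pow a hq)
  simpa only [qPoch, ← sub_eq_add_neg] using hne

lemma prod_qPoch_mul_pow (a : ℂ) (hq : ‖q‖ < 1) {n : ℕ} (hn : 0 < n) :
    ∏ j ∈ range n, qPoch (a * q ^ j) (q ^ n) = qPoch a q := by
  have hlim := tendsto_finsetProd (range n) fun j _ =>
    tendsto_qPochFin (a * q ^ j) (norm_pow_lt_one hq hn.ne')
  simp only [prod_qPochFin_mul_pow] at hlim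
  exact tendsto_nhds_unique hlim ((tendsto_qPochFin a hq).comp (tendsto_id.atTop_mul_const' hn))

lemma prod_Ico_qPoch_pow (hq : ‖q‖ < 1) {n : ℕ} (hn : 0 < n) :
    ∏ k ∈ Ico 1 n, qPoch (q ^ k) (q ^ n) = qPoch q q / qPoch (q ^ n) (q ^ n) := by
  have hqn := norm_pow_lt_one hq hn.ne'
  rw [eq_div_iff (qPoch_ne_zero hqn hqn), ← prod_Ico_succ_top hn,
    ← prod_qPoch_mul_pow q hq hn, prod_Ico_eq_prod_range]
  simp only [Nat.add_sub_cancel, pow_add, pow_one]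

lemma prod_Ico_qPoch_pow_sub (hq : ‖q‖ < 1) {n : ℕ} (hn : 0 < n) :
    ∏ k ∈ Ico 1 n, qPoch (q ^ (n - k)) (q ^ n) = qPoch q q / qPoch (q ^ n) (q ^ n) := by
  have hreflect := prod_Ico_reflect (fun k => qPoch (q ^ k) (q ^ n)) 1 n.le_succ
  rw [Nat.add_sub_cancel_left, Nat.add_sub_cancel] at hreflect
  rw [hreflect, prod_Ico_qPoch_pow hq hn]

lemma tendsto_gaussBinom_add (hq : ‖q‖ < 1) {ι : Type*} {l : Filter ι} {f g : ι → ℕ}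
    (hf : Tendsto f l atTop) (hg : Tendsto g l atTop) :
    Tendsto (fun i => gaussBinom q (f i + g i) (f i)) l (𝓝 (qPoch q q)⁻¹) := by
  have hP := qPoch_ne_zero hq hq
  have hF := tendsto_qPochFin q hq
  simp only [gaussBinom_add_eq_div hq]
  rw [← div_mul_cancel_left₀ hP]
  exact (hF.comp (hf.atTop_add_atTop hg)).div ((hF.comp hf).mul (hF.comp hg)) (mul_ne_zero hP hP)

lemma exists_norm_gaussBinom_add_le (hq : ‖q‖ < 1) :
    ∃ C : ℝ, ∀ m n, ‖gaussBinom q (m + n) m‖ ≤ C := by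
  have hF := tendsto_qPochFin q hq
  obtain ⟨A, hA⟩ := hF.norm.bddAbove_range
  obtain ⟨B, hB⟩ := (hF.inv₀ (qPoch_ne_zero hq hq)).norm.bddAbove_range
  replace hA (n : ℕ) : ‖qPochFin q q n‖ ≤ A := hA ⟨n, rfl⟩
  replace hB (n : ℕ) : ‖(qPochFin q q n)⁻¹‖ ≤ B := hB ⟨n, rfl⟩
  have hA₀ : 0 ≤ A := (norm_nonneg _).trans (hA 0)
  have hB₀ : 0 ≤ B := (norm_nonneg _).trans (hB 0)
  refine ⟨A * (B * B), fun m n => ?_⟩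
  rw [gaussBinom_add_eq_div hq, div_eq_mul_inv, mul_inv, norm_mul, norm_mul]
  gcongr <;> apply_rules

theorem tendsto_sum_Icc_gaussBinom_mul (hq : ‖q‖ < 1) {f : ℤ → ℂ} (hf : Summable f) :
    Tendsto (fun N : ℕ => ∑ k ∈ Icc (-N : ℤ) N, gaussBinom q (2 * N) (N + k).toNat * f k) atTop
      (𝓝 ((qPoch q q)⁻¹ * ∑' k, f k)) := by
  obtain ⟨C, hC⟩ := exists_norm_gaussBinom_add_le hq
  have htwo {N : ℕ} {k : ℤ} (hk : k ∈ Icc (-N : ℤ) N) :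
      2 * N = (N + k).toNat + (N - k).toNat := by
    have := mem_Icc.mp hk
    omega
  have hplus (k : ℤ) : Tendsto (fun N : ℕ => (N + k).toNat) atTop atTop :=
    tendsto_atTop.mpr fun b => (eventually_ge_atTop (b + k.natAbs)).mono fun N hN => by omega
  have hind (N : ℕ) (g : ℤ → ℂ) :
      ∑ k ∈ Icc (-N : ℤ) N, g k = ∑' k, (↑(Icc (-N : ℤ) N) : Set ℤ).indicator g k :=
    sum_eq_tsum_indicator g _
  simp only [hind, ← tsum_mul_left]
  refine tendsto_tsum_of_dominated_convergence (hf.norm.mul_left C) (fun k => ?_)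
    (.of_forall fun N k => ?_)
  · refine ((tendsto_gaussBinom_add hq (hplus k) (hplus (-k))).mul_const (f k)).congr' ?_
    filter_upwards [eventually_ge_atTop k.natAbs] with N hN
    have hk : k ∈ Icc (-N : ℤ) N := mem_Icc.mpr (by omega)
    rw [Set.indicator_of_mem (mem_coe.mpr hk), htwo hk, sub_eq_add_neg]
  · by_cases hk : k ∈ Icc (-N : ℤ) N
    · rw [Set.indicator_of_mem (mem_coe.mpr hk), norm_mul, htwo hk]
      gcongr
      exact hC _ _
    · rw [Set.indicator_of_notMem (mem_coe.not.mpr hk), norm_zero]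
      exact mul_nonneg ((norm_nonneg _).trans (hC 0 0)) (norm_nonneg _)

end Complex

/-- The nome `e^{πiτ}`. -/
noncomputable def nome (τ : ℂ) : ℂ := exp (π * I * τ)

lemma nome_ne_zero (τ : ℂ) : nome τ ≠ 0 := exp_ne_zero _

lemma norm_nome_lt_one {τ : ℂ} (hτ : 0 < τ.im) : ‖nome τ‖ < 1 := by
  rw [nome, norm_exp, Real.exp_lt_one_iff]
  simpa using mul_pos Real.pi_pos hτ

lemma nome_add (x y : ℂ) : nome (x + y) = nome x * nome y := by
  rw [nome, mul_add, exp_add, nome, nome]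

lemma nome_sub (x y : ℂ) : nome (x - y) = nome x / nome y := by
  rw [nome, mul_sub, exp_sub, nome, nome]

lemma nome_sum {ι : Type*} (s : Finset ι) (f : ι → ℂ) :
    nome (∑ i ∈ s, f i) = ∏ i ∈ s, nome (f i) := by
  simp only [nome, mul_sum, exp_sum]

lemma nome_nat_mul (n : ℕ) (x : ℂ) : nome (n * x) = nome x ^ n := by
  rw [nome, mul_left_comm, exp_nat_mul, nome]

lemma nome_int_mul (n : ℤ) (x : ℂ) : nome (n * x) = nome x ^ n := by
  rw [nome, mul_left_comm, exp_int_mul, nome]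

lemma nome_one : nome 1 = -1 := by
  rw [nome, mul_one, exp_pi_mul_I]

lemma nome_one_half : nome (1 / 2) = I := by
  rw [nome, mul_one_div, mul_div_right_comm, exp_pi_div_two_mul_I]

/-- The Jacobi triple product. -/
theorem jacobiTheta₂_eq_qPoch (v : ℂ) {τ : ℂ} (hτ : 0 < τ.im) :
    jacobiTheta₂ v τ = qPoch (nome τ ^ 2) (nome τ ^ 2) *
      (qPoch (-nome (τ + 2 * v)) (nome τ ^ 2) * qPoch (-nome (τ - 2 * v)) (nome τ ^ 2)) := by
  have hterm (k : ℤ) : jacobiTheta₂_term k v τ = nome τ ^ k ^ 2 * nome (2 * v) ^ k := by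
    rw [← nome_int_mul, ← nome_int_mul, ← nome_add, jacobiTheta₂_term, nome]
    congr 1
    push_cast
    ring
  have hsum := (summable_jacobiTheta₂_term_iff v τ).mpr hτ
  simp only [hterm] at hsum
  have hq := norm_pow_lt_one (norm_nome_lt_one hτ) two_ne_zero
  have hprod := (tendsto_qPochFin (-nome (τ + 2 * v)) hq).mul
    (tendsto_qPochFin (-nome (τ - 2 * v)) hq)
  simp only [nome_add, nome_sub, qPochFin_mul_qPochFin_eq_sum_gaussBinom (nome_ne_zero τ)
    (nome_ne_zero (2 * v))] at hprod
  rw [nome_add, nome_sub, tendsto_nhds_unique hprod (tendsto_sum_Icc_gaussBinom_mul hq hsum),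
    mul_inv_cancel_left₀ (qPoch_ne_zero hq hq)]
  simp only [jacobiTheta₂, hterm]

lemma jacobiTheta₂_one_half_add_eq_qPoch (v : ℂ) {τ : ℂ} (hτ : 0 < τ.im) :
    jacobiTheta₂ (1 / 2 + v) τ = qPoch (nome τ ^ 2) (nome τ ^ 2) *
      (qPoch (nome (τ + 2 * v)) (nome τ ^ 2) * qPoch (nome (τ - 2 * v)) (nome τ ^ 2)) := by
  rw [jacobiTheta₂_eq_qPoch _ hτ]
  simp [mul_add, nome_add, nome_sub, nome_one, div_neg]

lemma theta1_eq_jacobiTheta₂ (z : ℂ) {τ : ℂ} (hτ : 0 < τ.im) :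
    theta1 z τ = I * nome (τ / 4 - z / π) * jacobiTheta₂ (1 / 2 + τ / 2 - z / π) τ := by
  have hpi : (π : ℂ) ≠ 0 := ofReal_ne_zero.mpr Real.pi_ne_zero
  set u := 1 / 2 + τ / 2 - z / π with hu
  have hsum := (summable_jacobiTheta₂_term_iff u τ).mpr hτ
  have hterm (m : ℤ) : nome (τ / 4 - z / π) * jacobiTheta₂_term m u τ =
      (-1) ^ m * exp (π * I * τ * (2 * m + 1) ^ 2 / 4) * exp (-(2 * m + 1) * z * I) := by
    rw [← nome_one, ← nome_int_mul, nome, nome, jacobiTheta₂_term, ← exp_add, ← exp_add,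
      ← exp_add, hu]
    congr 1
    field_simp
    ring
  rw [theta1, jacobiTheta₂, ← tsum_nat_add_neg_add_one hsum, ← tsum_mul_left, ← tsum_mul_left]
  refine tsum_congr fun n => ?_
  have hneg : 2 * ((-(n + 1) : ℤ) : ℂ) + 1 = -(2 * n + 1) := by
    push_cast
    ring
  have hsign : (-1 : ℂ) ^ (-(n + 1) : ℤ) = -(-1) ^ n := by
    rw [zpow_neg, ← inv_zpow, inv_neg_one, zpow_add_one₀ (by norm_num), zpow_natCast, mul_neg_one]
  rw [mul_assoc I, mul_add, hterm, hterm, hneg, hsign, neg_sq, neg_neg, sin]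
  push_cast
  rw [zpow_natCast, neg_mul _ z]
  ring

lemma neg_I_mul_cpow_one_half_ne_zero {τ : ℂ} (hτ : 0 < τ.im) :
    (-I * τ) ^ (1 / 2 : ℂ) ≠ 0 := by
  rw [cpow_ne_zero_iff_of_exponent_ne_zero (by norm_num)]
  exact mul_ne_zero (neg_ne_zero.mpr I_ne_zero) (UpperHalfPlane.ne_zero ⟨τ, hτ⟩)

/-- Jacobi's imaginary transformation of `θ₁`. -/
lemma theta1_neg_one_div (z : ℂ) {τ : ℂ} (hτ : 0 < τ.im) :
    theta1 z (-1 / τ) = (-I * τ) ^ (1 / 2 : ℂ) * nome (τ * (z / π - 1 / 2) ^ 2) *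
      jacobiTheta₂ (1 / 2 + τ * (z / π - 1 / 2)) τ := by
  have hτ₀ : τ ≠ 0 := UpperHalfPlane.ne_zero ⟨τ, hτ⟩
  have hτ' : 0 < (-1 / τ).im := by simpa using UpperHalfPlane.im_pnat_div_pos 1 ⟨τ, hτ⟩
  set v := 1 / 2 + τ * (z / π - 1 / 2) with hv
  have hshift : 1 / 2 + -1 / τ / 2 - z / π = -v / τ := by
    rw [hv]
    field_simp
    ring
  have hnome : I * nome (-1 / τ / 4 - z / π) =
      nome (τ * (z / π - 1 / 2) ^ 2) * exp (-π * I * (-v) ^ 2 / τ) := by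
    have hI (x : ℂ) : I * nome x = nome (1 / 2 + x) := by rw [nome_add, nome_one_half]
    rw [hI, nome, nome, ← exp_add, hv]
    congr 1
    field_simp
    ring
  rw [theta1_eq_jacobiTheta₂ z hτ', hshift, hnome, ← jacobiTheta₂_neg_left v,
    jacobiTheta₂_functional_equation (-v) τ]
  field_simp

/-- With `z = πx`, the square root from the imaginary transformation cancels in the quotient
defining the `q`-sine. -/
lemma qSin_mul_pi (x : ℂ) {τ : ℂ} (hτ : 0 < τ.im) :
    qSin τ (x * π) = nome (τ * (x - 1 / 2) ^ 2) *
      (qPoch (nome (2 * τ * x)) (nome τ ^ 2) * qPoch (nome (2 * τ * (1 - x))) (nome τ ^ 2)) /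
        qPoch (nome τ) (nome τ ^ 2) ^ 2 := by
  have hpi : (π : ℂ) ≠ 0 := ofReal_ne_zero.mpr Real.pi_ne_zero
  have hroot := neg_I_mul_cpow_one_half_ne_zero hτ
  have hq := norm_pow_lt_one (norm_nome_lt_one hτ) two_ne_zero
  have hP := qPoch_ne_zero hq hq
  have hhalf : (π : ℂ) / 2 / π - 1 / 2 = 0 := by
    field_simp
    ring
  rw [qSin, theta1_neg_one_div _ hτ, theta1_neg_one_div _ hτ, hhalf, mul_div_cancel_right₀ _ hpi,
    jacobiTheta₂_one_half_add_eq_qPoch _ hτ, jacobiTheta₂_one_half_add_eq_qPoch _ hτ,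
    show τ + 2 * (τ * (x - 1 / 2)) = 2 * τ * x by ring,
    show τ - 2 * (τ * (x - 1 / 2)) = 2 * τ * (1 - x) by ring]
  have hnome_zero : nome 0 = 1 := by rw [nome, mul_zero, exp_zero]
  simp only [mul_zero, add_zero, sub_zero, zero_pow two_ne_zero, hnome_zero, mul_one]
  rw [mul_assoc, mul_div_mul_left _ _ hroot, mul_left_comm, mul_div_mul_left _ _ hP,
    sq (qPoch (nome τ) _)]

lemma qSin_rational {n k : ℕ} (hn : 0 < n) (hk : k ≤ n) {τ : ℂ} (hτ : 0 < τ.im) :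
    qSin (n * τ) (k * π / n) = nome (τ / (4 * n) * (2 * k - n) ^ 2) *
      (qPoch ((nome τ ^ 2) ^ k) ((nome τ ^ 2) ^ n) *
        qPoch ((nome τ ^ 2) ^ (n - k)) ((nome τ ^ 2) ^ n)) /
      qPoch (nome τ ^ n) ((nome τ ^ 2) ^ n) ^ 2 := by
  have hn₀ : (n : ℂ) ≠ 0 := Nat.cast_ne_zero.mpr hn.ne'
  have hnτ : 0 < (n * τ).im := by simp [hn, hτ]
  have hpow (m : ℕ) : (nome τ ^ 2) ^ m = nome (2 * m * τ) := by
    rw [← pow_mul, ← nome_nat_mul]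
    push_cast
    rfl
  have hcentre : n * τ * (k / n - 1 / 2) ^ 2 = τ / (4 * n) * (2 * k - n) ^ 2 := by
    field_simp
    ring
  have hleft : 2 * (n * τ) * (k / n) = 2 * k * τ := by field_simp
  have hright : 2 * (n * τ) * (1 - k / n) = 2 * (n - k) * τ := by field_simp
  rw [mul_div_right_comm, qSin_mul_pi _ hnτ, hcentre, hleft, hright, nome_nat_mul n τ,
    pow_right_comm, hpow k, hpow (n - k), Nat.cast_sub hk]

lemma three_mul_sum_range_two_mul_sub_sq {R : Type*} [CommRing R] (x : R) (n : ℕ) :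
    3 * ∑ k ∈ range n, (2 * (k : R) - x) ^ 2 =
      n * (3 * x ^ 2 - 6 * (n - 1) * x + 2 * (n - 1) * (2 * n - 1)) := by
  induction n with
  | zero => simp
  | succ n ih =>
    rw [sum_range_succ, mul_add, ih]
    push_cast
    ring

lemma three_mul_sum_Ico_two_mul_sub_sq {R : Type*} [CommRing R] (n : ℕ) :
    3 * ∑ k ∈ Ico 1 n, (2 * (k : R) - n) ^ 2 = (n : R) * (n - 1) * (n - 2) := by
  obtain rfl | hn := n.eq_zero_or_pos
  · simp
  have hsum := three_mul_sum_range_two_mul_sub_sq (n : R) n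
  rw [range_eq_Ico, sum_eq_sum_Ico_succ_bot hn] at hsum
  push_cast at hsum
  linear_combination hsum

lemma prod_Ico_nome_mul_sq (τ : ℂ) {n : ℕ} (hn : 0 < n) :
    ∏ k ∈ Ico 1 n, nome (τ / (4 * n) * (2 * k - n) ^ 2) =
      nome (τ * (n - 1) * (n - 2) / 12) := by
  have hn₀ : (n : ℂ) ≠ 0 := Nat.cast_ne_zero.mpr hn.ne'
  rw [← nome_sum, ← mul_sum]
  congr 1
  field_simp
  linear_combination 4 * τ * three_mul_sum_Ico_two_mul_sub_sq (R := ℂ) n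

theorem qsin_product_at_rationals (n : ℕ) (hn : 0 < n) (τ : ℂ) (hτ : 0 < τ.im)
    (q : ℂ) (hq : q = Complex.exp (Real.pi * Complex.I * τ)) :
    ∏ k ∈ Finset.Icc 1 (n - 1), qSin ((n : ℂ) * τ) ((k : ℂ) * Real.pi / n) =
      Complex.exp (Real.pi * Complex.I * τ * ((n : ℂ) - 1) * ((n : ℂ) - 2) / 12) *
        (qPoch (q ^ 2) (q ^ 2)) ^ 2 /
        ((qPoch (q ^ n) (q ^ (2 * n))) ^ (2 * n - 2) *
          (qPoch (q ^ (2 * n)) (q ^ (2 * n))) ^ 2) := by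
  obtain rfl : q = nome τ := hq
  have hq := norm_pow_lt_one (norm_nome_lt_one hτ) two_ne_zero
  have hexp : exp (π * I * τ * (n - 1) * (n - 2) / 12) = nome (τ * (n - 1) * (n - 2) / 12) := by
    rw [nome]
    ring_nf
  rw [Icc_sub_one_right_eq_Ico_of_not_isMin (by simpa using hn.ne'),
    prod_congr rfl fun k hk => qSin_rational hn (mem_Ico.mp hk).2.le hτ]
  simp only [prod_div_distrib, prod_mul_distrib, prod_const, Nat.card_Ico]
  rw [prod_Ico_nome_mul_sq τ hn, prod_Ico_qPoch_pow hq hn, prod_Ico_qPoch_pow_sub hq hn, hexp,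
    ← sq, div_pow, mul_div_assoc', div_div, pow_mul (nome τ) 2 n, ← Nat.mul_sub_one,
    pow_mul _ 2 (n - 1), mul_comm (_ ^ 2)]
end
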